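/- For all integers m, n, k with k > 0 and m + n > 2k, one has ∑_{j=0}^{n+m-2k} C(n+m-2k, j) · (-1)^j · E_{j+2k, q^{-1}} = q^{-1} · ∑_{j=0}^{2k} C(2k, j) · (-1)^{j+2k} · E_{n+m-j, q}. (Corollary 7 of the paper, k > 0 case, obtained by comparing two p-adic integral evaluations of the product of Bernstein polynomials B_{k,n}(x)·B_{k,m}(x) weighted by q^{-x}.) -/

import Mathlib

open Polynomial

/-- The linear functional on `K[X]` sending `X ^ n` to `E n`. -/
noncomputable def umbral {K : Type*} [Field K] (E : ℕ → K) : K[X] →ₗ[K] K :=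
  (Polynomial.basisMonomials K).constr K E

theorem umbral_X_pow {K : Type*} [Field K] (E : ℕ → K) (n : ℕ) :
    umbral E (X ^ n) = E n := by
  have h := (Polynomial.basisMonomials K).constr_basis K E n
  simp only [Polynomial.coe_basisMonomials, Polynomial.monomial_one_right_eq_X_pow] at h
  exact h

theorem umbral_C_mul_X_pow {K : Type*} [Field K] (E : ℕ → K) (c : K) (n : ℕ) :
    umbral E (C c * X ^ n) = c * E n := by
  rw [← smul_eq_C_mul, map_smul, umbral_X_pow, smul_eq_mul]

/-- The umbral recurrence, extended by linearity to all polynomials. -/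
theorem umbral_shift {K : Type*} [Field K] {q : K} (hq1 : q + 1 ≠ 0) {E : ℕ → K}
    (hE0 : E 0 = 2 / (q + 1))
    (hE : ∀ n : ℕ, 1 ≤ n →
      q * ∑ l ∈ Finset.range (n + 1), (n.choose l : K) * E l + E n = 0) (p : K[X]) :
    q * umbral E (p.comp (X + 1)) + umbral E p = 2 * p.eval 0 := by
  induction p using Polynomial.induction_on' with
  | add p r hp hr =>
    simp only [add_comp, map_add, eval_add]
    linear_combination hp + hr
  | monomial n a =>
    have hpow : umbral E ((X + 1) ^ n) =
        ∑ l ∈ Finset.range (n + 1), (n.choose l : K) * E l := by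
      rw [add_pow, map_sum]
      refine Finset.sum_congr rfl fun l _ => ?_
      rw [← umbral_C_mul_X_pow]
      congr 1
      simp [mul_comm]
    rw [monomial_comp, ← C_mul_X_pow_eq_monomial, umbral_C_mul_X_pow, ← smul_eq_C_mul, map_smul,
      hpow, smul_eq_mul]
    rcases Nat.eq_zero_or_pos n with rfl | hn
    · simp [hE0]
      field_simp
    · simp only [eval_mul, eval_C, eval_pow, eval_X, zero_pow hn.ne']
      linear_combination a * hE n hn

/-- A functional annihilated by the homogeneous umbral recurrence vanishes. -/
theorem eq_zero_of_shift {K : Type*} [Field K] {q : K} (hq1 : q + 1 ≠ 0) (D : K[X] →ₗ[K] K)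
    (hD : ∀ p : K[X], q * D (p.comp (X + 1)) + D p = 0) : D = 0 := by
  have hX : ∀ n : ℕ, D (X ^ n) = 0 := by
    intro n
    induction n using Nat.strong_induction_on with
    | _ n ih =>
      have h := hD (X ^ n)
      have hsum : ∑ l ∈ Finset.range n,
          D ((X : K[X]) ^ l * 1 ^ (n - l) * (n.choose l : K[X])) = 0 := by
        refine Finset.sum_eq_zero fun l hl => ?_
        have : (X : K[X]) ^ l * 1 ^ (n - l) * (n.choose l : K[X])
            = (n.choose l : K) • X ^ l := by
          simp [smul_eq_C_mul, mul_comm]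
        rw [this, map_smul, ih l (Finset.mem_range.1 hl), smul_zero]
      rw [X_pow_comp, add_pow, map_sum, Finset.sum_range_succ, hsum] at h
      simp only [Nat.sub_self, pow_zero, mul_one, Nat.choose_self, Nat.cast_one, zero_add] at h
      exact (mul_eq_zero.1 (show (q + 1) * D (X ^ n) = 0 by linear_combination h)).resolve_left hq1
  refine (Polynomial.basisMonomials K).ext fun n => ?_
  simp [Polynomial.coe_basisMonomials, Polynomial.monomial_one_right_eq_X_pow, hX]

/-- Reflection between the functionals for `q` and `q⁻¹`. -/
theorem umbral_reflect {K : Type*} [Field K] {q : K} (hq0 : q ≠ 0) (hq1 : q + 1 ≠ 0)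
    {L L' : K[X] →ₗ[K] K}
    (hL : ∀ p : K[X], q * L (p.comp (X + 1)) + L p = 2 * p.eval 0)
    (hL' : ∀ p : K[X], q⁻¹ * L' (p.comp (X + 1)) + L' p = 2 * p.eval 0) (p : K[X]) :
    L' (p.comp (-1 - X)) = q * L p := by
  have hD := eq_zero_of_shift hq1
    (q • L - L' ∘ₗ (aeval (-1 - X : K[X])).toLinearMap) (fun r => by
      have h1 := hL r
      have h2 := hL' (r.comp (-X))
      have e1 : (r.comp (X + 1)).comp (-1 - X) = r.comp (-X) := by
        rw [comp_assoc]; congr 1; simp; ring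
      have e2 : (r.comp (-X)).comp (X + 1) = r.comp (-1 - X) := by
        rw [comp_assoc]; congr 1; simp; ring
      rw [e2] at h2
      simp only [eval_comp, eval_neg, eval_X, neg_zero] at h2
      simp only [LinearMap.sub_apply, LinearMap.smul_apply, LinearMap.comp_apply,
        AlgHom.toLinearMap_apply, smul_eq_mul, ← comp_eq_aeval, e1]
      have h3 : L' (r.comp (-1 - X)) + q * L' (r.comp (-X)) = q * (2 * r.eval 0) := by
        rw [← h2]; field_simp
      linear_combination q * h1 - h3)
  have h := LinearMap.congr_fun hD p
  simp only [LinearMap.sub_apply, LinearMap.smul_apply, LinearMap.comp_apply,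
    AlgHom.toLinearMap_apply, smul_eq_mul, ← comp_eq_aeval, LinearMap.zero_apply] at h
  linear_combination -h

/-- If `p` vanishes at `0` and `1`, then `x ↦ 1 - x` exchanges the functionals up to `q⁻¹`. -/
theorem umbral_one_sub {K : Type*} [Field K] {q : K} (hq0 : q ≠ 0) (hq1 : q + 1 ≠ 0)
    {L L' : K[X] →ₗ[K] K}
    (hL : ∀ p : K[X], q * L (p.comp (X + 1)) + L p = 2 * p.eval 0)
    (hL' : ∀ p : K[X], q⁻¹ * L' (p.comp (X + 1)) + L' p = 2 * p.eval 0) (p : K[X])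
    (h0 : p.eval 0 = 0) (h1 : p.eval 1 = 0) :
    L' (p.comp (1 - X)) = q⁻¹ * L p := by
  have hr := umbral_reflect hq0 hq1 hL hL' ((p.comp (X + 1)).comp (X + 1))
  have e : ((p.comp (X + 1)).comp (X + 1)).comp (-1 - X) = p.comp (1 - X) := by
    rw [comp_assoc, comp_assoc]; congr 1; simp; ring
  have s0 := hL p
  have s1 := hL (p.comp (X + 1))
  simp only [eval_comp, eval_add, eval_X, eval_one, zero_add, h0, h1, mul_zero] at s0 s1
  rw [← e, hr, eq_inv_mul_iff_mul_eq₀ hq0]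
  linear_combination q * s1 - s0

/-- Corollary 7 (k > 0 case): for `k > 0` and `m + n > 2k`,
`∑_{j=0}^{n+m-2k} C(n+m-2k,j)·(-1)^j·E_{j+2k,q⁻¹}
  = q⁻¹·∑_{j=0}^{2k} C(2k,j)·(-1)^{j+2k}·E_{n+m-j,q}`.
`E : ℕ → K` are the q-Euler numbers for `q`, `E' : ℕ → K` those for `q⁻¹`. -/
theorem qEuler_bernstein_product_kpos {K : Type*} [Field K] [CharZero K]
    (q : K) (hq0 : q ≠ 0) (hq1 : q ≠ -1)
    (E E' : ℕ → K)
    (hE0 : E 0 = 2 / (q + 1))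
    (hE : ∀ n : ℕ, 1 ≤ n →
      q * ∑ l ∈ Finset.range (n + 1), (n.choose l : K) * E l + E n = 0)
    (hE'0 : E' 0 = 2 / (q⁻¹ + 1))
    (hE' : ∀ n : ℕ, 1 ≤ n →
      q⁻¹ * ∑ l ∈ Finset.range (n + 1), (n.choose l : K) * E' l + E' n = 0) :
    ∀ m n k : ℕ, 0 < k → 2 * k < m + n →
      ∑ j ∈ Finset.range (n + m - 2 * k + 1),
          ((n + m - 2 * k).choose j : K) * (-1 : K) ^ j * E' (j + 2 * k)
        = q⁻¹ * ∑ j ∈ Finset.range (2 * k + 1),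
            ((2 * k).choose j : K) * (-1 : K) ^ (j + 2 * k) * E (n + m - j) := by
  intro m n k hk hmn
  have hq1' : q + 1 ≠ 0 := fun h => hq1 (eq_neg_of_add_eq_zero_left h)
  have hq1i : q⁻¹ + 1 ≠ 0 := by
    intro h
    apply hq1'
    have : q * (q⁻¹ + 1) = 0 := by rw [h, mul_zero]
    rw [mul_add, mul_inv_cancel₀ hq0] at this
    linear_combination this
  obtain ⟨N, hN⟩ : ∃ N, n + m = N + 2 * k := ⟨n + m - 2 * k, by omega⟩
  have hNpos : N ≠ 0 := by omega
  have key := umbral_one_sub hq0 hq1' (umbral_shift hq1' hE0 hE) (umbral_shift hq1i hE'0 hE')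
    (X ^ N * (X - 1) ^ (2 * k)) (by simp [hNpos]) (by simp [hk.ne'])
  have hleft : (X ^ N * (X - 1) ^ (2 * k) : K[X]).comp (1 - X) =
      ∑ j ∈ Finset.range (N + 1), C ((N.choose j : K) * (-1) ^ j) * X ^ (j + 2 * k) := by
    have : (X ^ N * (X - 1) ^ (2 * k) : K[X]).comp (1 - X) = (-X + 1) ^ N * X ^ (2 * k) := by
      simp only [mul_comp, pow_comp, X_comp, sub_comp, one_comp]
      rw [show (1 - X - 1 : K[X]) = -X by ring, (even_two_mul k).neg_pow]
      ring
    rw [this, add_pow, Finset.sum_mul]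
    refine Finset.sum_congr rfl fun j _ => ?_
    rw [neg_pow]
    simp
    ring
  have hright : (X ^ N * (X - 1) ^ (2 * k) : K[X]) =
      ∑ j ∈ Finset.range (2 * k + 1),
        C (((2 * k).choose j : K) * (-1) ^ (j + 2 * k)) * X ^ (N + 2 * k - j) := by
    rw [show (X - 1 : K[X]) = -1 + X by ring, add_pow, Finset.mul_sum]
    refine Finset.sum_congr rfl fun j hj => ?_
    rw [Nat.add_sub_assoc (Nat.lt_succ_iff.1 (Finset.mem_range.1 hj)), pow_add X N,
      pow_add (-1 : K) j, (even_two_mul k).neg_one_pow]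
    simp
    ring
  rw [hleft, hright, map_sum, map_sum] at key
  simp only [umbral_C_mul_X_pow] at key
  rw [hN, Nat.add_sub_cancel]
  exact key
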